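/- Let θ < 0, A ∈ ℝ^{d×d}, B ∈ ℝ^{d×m}, C ∈ ℝ^{k×d}, σ ∈ ℝ^{d×n}, and let R ∈ ℝ^{m×m} be symmetric positive definite. Let S : [0,T] → ℝ^{d×d} be a continuously differentiable symmetric-positive-definite-matrix-valued function satisfying (d/dt)S_t = A S_t + S_t Aᵀ + |θ| S_t CᵀC S_t − (1/|θ|)(B R⁻¹ Bᵀ − θ σσᵀ). Let ρ(t,z) := (2π)^{−d/2} (det S_t)^{−1/2} exp(−½ zᵀ S_t⁻¹ z) be the density of N(0, S_t). Then for all t ∈ [0,T] and z ∈ ℝ^d, ∂ρ/∂t (t,z) = −∇_z·( ρ(t,·) ( A(·) + (|θ|/2) S_t CᵀC (·) ) )(z) − ½ tr( ((1/|θ|) B R⁻¹ Bᵀ + σσᵀ) ∇_z²ρ(t,z) ), where A(·) and (|θ|/2)S_tCᵀC(·) denote the linear vector fields z ↦ Az and z ↦ (|θ|/2)S_tCᵀCz. -/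

import Mathlib

open Matrix

/-- Partial derivative in direction `i`. -/
noncomputable def pd {d : ℕ} (i : Fin d) (f : (Fin d → ℝ) → ℝ) (x : Fin d → ℝ) : ℝ :=
  fderiv ℝ f x (Pi.single i 1)

/-- Spatial gradient. -/
noncomputable def grad {d : ℕ} (f : (Fin d → ℝ) → ℝ) (x : Fin d → ℝ) : Fin d → ℝ :=
  fun i => pd i f x

/-- Spatial Hessian as a matrix. -/
noncomputable def hess {d : ℕ} (f : (Fin d → ℝ) → ℝ) (x : Fin d → ℝ) :
    Matrix (Fin d) (Fin d) ℝ :=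
  Matrix.of fun i j => pd i (fun y => pd j f y) x

/-- Divergence of a vector field. -/
noncomputable def dvg {d : ℕ} (v : (Fin d → ℝ) → (Fin d → ℝ)) (x : Fin d → ℝ) : ℝ :=
  ∑ i, pd i (fun y => v y i) x

/-- Jacobi's formula: the derivative of the determinant of a matrix-valued curve. -/
theorem Matrix.hasDerivAt_det {ι : Type*} [Fintype ι] [DecidableEq ι]
    {S : ℝ → Matrix ι ι ℝ} {S' : Matrix ι ι ℝ} {t : ℝ}
    (hS : ∀ i j, HasDerivAt (fun s => S s i j) (S' i j) t) :
    HasDerivAt (fun s => (S s).det) ((adjugate (S t) * S').trace) t := by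
  let f : ContinuousMultilinearMap ℝ (fun _ : ι => ι → ℝ) ℝ :=
    { (detRowAlternating (R := ℝ) (n := ι)).toMultilinearMap with
      cont := Continuous.matrix_det (A := fun M : Matrix ι ι ℝ => M) continuous_id }
  have hrow : HasDerivAt (fun s => (fun i j => S s i j : ι → ι → ℝ)) (fun i j => S' i j) t :=
    hasDerivAt_pi.2 fun i => hasDerivAt_pi.2 fun j => hS i j
  have hcomp := (f.hasFDerivAt (fun i j => S t i j)).comp_hasDerivAt t hrow
  refine hcomp.congr_deriv ?_
  rw [ContinuousMultilinearMap.linearDeriv_apply, trace_mul_comm]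
  refine Finset.sum_congr rfl fun i _ => ?_
  change ((S t).updateRow i (S' i)).det = _
  rw [← cramer_transpose_apply, cramer_eq_adjugate_mulVec, ← adjugate_transpose, mulVec_transpose]
  rfl

open scoped Matrix.Norms.Operator in
/-- The entrywise derivative of the inverse of a matrix-valued curve. -/
theorem Matrix.hasDerivAt_inv_apply {ι : Type*} [Fintype ι] [DecidableEq ι]
    {S : ℝ → Matrix ι ι ℝ} {S' : Matrix ι ι ℝ} {t : ℝ}
    (hS : ∀ i j, HasDerivAt (fun s => S s i j) (S' i j) t) (hunit : IsUnit (S t)) (i j : ι) :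
    HasDerivAt (fun s => (S s)⁻¹ i j) (-((S t)⁻¹ * S' * (S t)⁻¹) i j) t := by
  have hmat : HasDerivAt S S' t := by
    have hsum := HasDerivAt.fun_sum (u := Finset.univ) fun a _ =>
      HasDerivAt.fun_sum (u := Finset.univ) fun b _ =>
        (hS a b).smul_const (Matrix.single a b (1 : ℝ))
    have hdecomp : ∀ M : Matrix ι ι ℝ, ∑ a, ∑ b, M a b • Matrix.single a b (1 : ℝ) = M := by
      intro M
      simpa [Matrix.smul_single] using (matrix_eq_sum_single M).symm
    simp only [hdecomp] at hsum
    exact hsum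
  obtain ⟨u, hu⟩ := hunit
  have hinv := hasFDerivAt_ringInverse (𝕜 := ℝ) u
  rw [hu] at hinv
  have hcomp := hinv.comp_hasDerivAt t hmat
  have hentry := (LinearMap.toContinuousLinearMap
    (Matrix.entryLinearMap ℝ ℝ i j)).hasFDerivAt.comp_hasDerivAt t hcomp
  have huinv : ((u⁻¹ : (Matrix ι ι ℝ)ˣ) : Matrix ι ι ℝ) = (S t)⁻¹ := by
    rw [← hu, coe_units_inv]
  simp only [nonsing_inv_eq_ringInverse] at huinv ⊢
  refine hentry.congr_deriv ?_
  rw [huinv]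
  rfl

theorem HasFDerivAt.pd_eq {d : ℕ} {f : (Fin d → ℝ) → ℝ} {f' : (Fin d → ℝ) →L[ℝ] ℝ}
    {x : Fin d → ℝ} (h : HasFDerivAt f f' x) (i : Fin d) : pd i f x = f' (Pi.single i 1) := by
  rw [pd, h.fderiv]

theorem Matrix.hasFDerivAt_mulVec_apply {d : ℕ} (M : Matrix (Fin d) (Fin d) ℝ) (i : Fin d)
    (x : Fin d → ℝ) :
    HasFDerivAt (fun y => (M *ᵥ y) i)
      ((ContinuousLinearMap.proj (R := ℝ) (φ := fun _ : Fin d => ℝ) i).comp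
        (LinearMap.toContinuousLinearMap M.mulVecLin)) x :=
  ((ContinuousLinearMap.proj (R := ℝ) (φ := fun _ : Fin d => ℝ) i).comp
    (LinearMap.toContinuousLinearMap M.mulVecLin)).hasFDerivAt

section Gaussian

variable {d : ℕ} {c : ℝ} {P : Matrix (Fin d) (Fin d) ℝ} {g : (Fin d → ℝ) → ℝ}

theorem differentiable_gaussian
    (hg : ∀ y, g y = c * Real.exp (-(1 / 2) * (y ⬝ᵥ P *ᵥ y))) : Differentiable ℝ g := by
  have hquad : Differentiable ℝ fun y : Fin d → ℝ => y ⬝ᵥ P *ᵥ y := fun x =>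
    (HasFDerivAt.fun_sum fun i _ => (hasFDerivAt_apply (𝕜 := ℝ) i x).mul
      (hasFDerivAt_mulVec_apply P i x)).differentiableAt
  rw [funext hg]
  fun_prop

theorem pd_gaussian (hP : P.IsSymm)
    (hg : ∀ y, g y = c * Real.exp (-(1 / 2) * (y ⬝ᵥ P *ᵥ y))) (i : Fin d) (x : Fin d → ℝ) :
    pd i g x = -(g x * (P *ᵥ x) i) := by
  have hquad : HasFDerivAt (fun y : Fin d → ℝ => y ⬝ᵥ P *ᵥ y) _ x :=
    HasFDerivAt.fun_sum fun i _ => (hasFDerivAt_apply (𝕜 := ℝ) i x).mul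
      (hasFDerivAt_mulVec_apply P i x)
  have hgauss := ((hquad.const_mul (-(1 / 2))).exp).const_mul c
  have hsymm : ∑ j, x j * P j i = (P *ᵥ x) i :=
    Finset.sum_congr rfl fun j _ => by rw [hP.apply, mul_comm]
  rw [← funext hg] at hgauss
  rw [hgauss.pd_eq, hg x]
  simp [Finset.sum_add_distrib, Pi.single_apply, hsymm]
  ring

theorem pd_gaussian_mul_mulVec (hP : P.IsSymm)
    (hg : ∀ y, g y = c * Real.exp (-(1 / 2) * (y ⬝ᵥ P *ᵥ y))) (M : Matrix (Fin d) (Fin d) ℝ)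
    (i j : Fin d) (x : Fin d → ℝ) :
    pd i (fun y => g y * (M *ᵥ y) j) x = g x * (M j i - (P *ᵥ x) i * (M *ᵥ x) j) := by
  have hmul := ((differentiable_gaussian hg x).hasFDerivAt).mul (hasFDerivAt_mulVec_apply M j x)
  have hpd := pd_gaussian hP hg i x
  rw [pd] at hpd
  refine (HasFDerivAt.pd_eq hmul i).trans ?_
  simp [hpd]
  ring

theorem dvg_gaussian_smul_mulVec (hP : P.IsSymm)
    (hg : ∀ y, g y = c * Real.exp (-(1 / 2) * (y ⬝ᵥ P *ᵥ y))) (M : Matrix (Fin d) (Fin d) ℝ)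
    (x : Fin d → ℝ) :
    dvg (fun y => g y • M *ᵥ y) x = g x * (M.trace - P *ᵥ x ⬝ᵥ M *ᵥ x) := by
  simp only [dvg, Pi.smul_apply, smul_eq_mul, pd_gaussian_mul_mulVec hP hg, ← Finset.mul_sum,
    Finset.sum_sub_distrib]
  rfl

theorem hess_gaussian (hP : P.IsSymm)
    (hg : ∀ y, g y = c * Real.exp (-(1 / 2) * (y ⬝ᵥ P *ᵥ y))) (x : Fin d → ℝ) :
    hess g x = g x • (vecMulVec (P *ᵥ x) (P *ᵥ x) - P) := by
  ext i j
  have hpd := pd_gaussian_mul_mulVec hP hg P i j x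
  have hgrad : (fun y => pd j g y) = fun y => -(g y * (P *ᵥ y) j) :=
    funext fun y => pd_gaussian hP hg j y
  rw [hess, of_apply, hgrad, pd, fderiv_fun_neg]
  change -(pd i (fun y => g y * (P *ᵥ y) j) x) = _
  rw [hpd, hP.apply]
  simp [vecMulVec_apply]
  ring

end Gaussian

/-- The time derivative of a centred Gaussian density with time-dependent covariance. -/
theorem hasDerivAt_gaussian {d : ℕ} {S : ℝ → Matrix (Fin d) (Fin d) ℝ}
    {S' : Matrix (Fin d) (Fin d) ℝ} {t : ℝ}
    (hS : ∀ i j, HasDerivAt (fun s => S s i j) (S' i j) t) (hpos : (S t).PosDef)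
    (c : ℝ) (z : Fin d → ℝ) :
    HasDerivAt
      (fun s => c * (S s).det ^ (-(1 : ℝ) / 2) * Real.exp (-(1 / 2) * (z ⬝ᵥ (S s)⁻¹ *ᵥ z)))
      (c * (S t).det ^ (-(1 : ℝ) / 2) * Real.exp (-(1 / 2) * (z ⬝ᵥ (S t)⁻¹ *ᵥ z)) *
        (1 / 2 * (((S t)⁻¹ *ᵥ z) ⬝ᵥ S' *ᵥ ((S t)⁻¹ *ᵥ z)) - 1 / 2 * ((S t)⁻¹ * S').trace)) t := by
  have hdet : 0 < (S t).det := hpos.det_pos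
  have hsymm : ((S t)⁻¹)ᵀ = (S t)⁻¹ := by
    simpa [IsHermitian, conjTranspose_eq_transpose_of_trivial] using hpos.isHermitian.inv
  have hquad : HasDerivAt (fun s => z ⬝ᵥ (S s)⁻¹ *ᵥ z)
      (-(((S t)⁻¹ *ᵥ z) ⬝ᵥ S' *ᵥ ((S t)⁻¹ *ᵥ z))) t := by
    have hsum : HasDerivAt (fun s => z ⬝ᵥ (S s)⁻¹ *ᵥ z) _ t :=
      HasDerivAt.fun_sum fun i _ => (HasDerivAt.fun_sum (u := Finset.univ) fun j _ =>
        (hasDerivAt_inv_apply hS hpos.isUnit i j).mul_const (z j)).const_mul (z i)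
    refine hsum.congr_deriv ?_
    change z ⬝ᵥ (-((S t)⁻¹ * S' * (S t)⁻¹)) *ᵥ z = _
    rw [neg_mulVec, dotProduct_neg, ← mulVec_mulVec, ← mulVec_mulVec, dotProduct_mulVec,
      ← mulVec_transpose, hsymm]
  have hpow := (hasDerivAt_det hS).rpow_const (p := -(1 : ℝ) / 2) (Or.inl hdet.ne')
  have htrace : (adjugate (S t) * S').trace = (S t).det * ((S t)⁻¹ * S').trace := by
    rw [inv_def, Ring.inverse_eq_inv', smul_mul, trace_smul, smul_eq_mul,
      mul_inv_cancel_left₀ hdet.ne']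
  refine ((hpow.const_mul c).mul (hquad.const_mul (-(1 / 2))).exp).congr_deriv ?_
  rw [htrace, Real.rpow_sub_one hdet.ne']
  field_simp
  ring

/-- Fokker-Planck equation of the dual-EnKF mean-field process in the
LEQG (risk-seeking, θ < 0) case: correction term vanishes, drift `Az`, interaction
`(|θ|/2) S_t CᵀC z`, diffusion `(1/|θ|) BR⁻¹Bᵀ + σσᵀ`. -/
theorem leqg_neg_mean_field_fokker_planck
    (d m k n : ℕ) (T : ℝ) (hT : 0 < T)
    (θ : ℝ) (hθ : θ < 0)
    (A : Matrix (Fin d) (Fin d) ℝ) (B : Matrix (Fin d) (Fin m) ℝ)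
    (C : Matrix (Fin k) (Fin d) ℝ) (σ : Matrix (Fin d) (Fin n) ℝ)
    (R : Matrix (Fin m) (Fin m) ℝ) (hR : R.PosDef)
    (S S' : ℝ → Matrix (Fin d) (Fin d) ℝ)
    (hSpd : ∀ t ∈ Set.Icc (0 : ℝ) T, (S t).PosDef)
    (hS : ∀ t ∈ Set.Icc (0 : ℝ) T, ∀ i j, HasDerivAt (fun s => S s i j) (S' t i j) t)
    (hS'cont : ∀ i j, ContinuousOn (fun t => S' t i j) (Set.Icc (0 : ℝ) T))
    (hric : ∀ t ∈ Set.Icc (0 : ℝ) T,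
      S' t = A * S t + S t * Aᵀ + |θ| • (S t * (Cᵀ * C) * S t)
        - |θ|⁻¹ • (B * R⁻¹ * Bᵀ - θ • (σ * σᵀ)))
    (ρ : ℝ → (Fin d → ℝ) → ℝ)
    (hρ : ∀ t z, ρ t z =
      (2 * Real.pi) ^ (-(d : ℝ) / 2) * (S t).det ^ (-(1 : ℝ) / 2) *
        Real.exp (-(1 / 2) * (z ⬝ᵥ (S t)⁻¹.mulVec z))) :
    ∀ t ∈ Set.Icc (0 : ℝ) T, ∀ z,
      deriv (fun s => ρ s z) t =
        -(dvg (fun y => ρ t y •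
            (A.mulVec y + (|θ| / 2) • ((S t * (Cᵀ * C)).mulVec y))) z)
        - (1 / 2) * ((|θ|⁻¹ • (B * R⁻¹ * Bᵀ) + σ * σᵀ) * hess (ρ t) z).trace := by
  intro t ht z
  have hpos := hSpd t ht
  have hdet : IsUnit (S t).det := hpos.det_pos.ne'.isUnit
  have hSsymm : (S t)ᵀ = S t := by
    simpa [IsHermitian, conjTranspose_eq_transpose_of_trivial] using hpos.isHermitian
  have hPsymm : ((S t)⁻¹).IsSymm := by
    rw [IsSymm, transpose_nonsing_inv, hSsymm]
  set M := A + (|θ| / 2) • (S t * (Cᵀ * C)) with hM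
  set Q := |θ|⁻¹ • (B * R⁻¹ * Bᵀ) + σ * σᵀ with hQ
  have hS'eq : S' t = M * S t + S t * Mᵀ - Q := by
    have hθinv : |θ|⁻¹ * θ = -1 := by
      rw [abs_of_neg hθ, inv_neg, neg_mul, inv_mul_cancel₀ hθ.ne]
    have hMT : Mᵀ = Aᵀ + (|θ| / 2) • (Cᵀ * C * S t) := by
      simp [hM, transpose_mul, hSsymm, Matrix.mul_assoc]
    rw [hric t ht, hMT, hM, hQ, smul_sub, smul_smul, hθinv]
    simp only [add_mul, mul_add, smul_mul, Matrix.mul_smul, Matrix.mul_assoc]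
    module
  have hdrift : (fun y => ρ t y • (A *ᵥ y + (|θ| / 2) • ((S t * (Cᵀ * C)) *ᵥ y))) =
      fun y => ρ t y • M *ᵥ y := by
    funext y
    rw [hM, add_mulVec, smul_mulVec]
  have hderiv := hasDerivAt_gaussian (hS t ht) hpos ((2 * Real.pi) ^ (-(d : ℝ) / 2)) z
  rw [← hρ t z, ← funext fun s => hρ s z] at hderiv
  rw [hderiv.deriv, hdrift, dvg_gaussian_smul_mulVec hPsymm (hρ t),
    hess_gaussian hPsymm (hρ t)]
  set u := (S t)⁻¹ *ᵥ z with hu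
  have hz : S t *ᵥ u = z := by
    rw [hu, mulVec_mulVec, mul_nonsing_inv _ hdet, one_mulVec]
  have htrace : ((S t)⁻¹ * S' t).trace = 2 * M.trace - (Q * (S t)⁻¹).trace := by
    rw [hS'eq, mul_sub, mul_add, trace_sub, trace_add, trace_mul_comm _ (M * S t),
      mul_nonsing_inv_cancel_right _ _ hdet, nonsing_inv_mul_cancel_left _ _ hdet,
      trace_transpose, trace_mul_comm _ Q]
    ring
  have hquad : u ⬝ᵥ S' t *ᵥ u = 2 * (u ⬝ᵥ M *ᵥ z) - u ⬝ᵥ Q *ᵥ u := by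
    have hcross : u ⬝ᵥ (S t * Mᵀ) *ᵥ u = u ⬝ᵥ M *ᵥ z := by
      rw [← mulVec_mulVec, dotProduct_mulVec, ← mulVec_transpose, hSsymm, hz, mulVec_transpose,
        dotProduct_comm, dotProduct_mulVec]
    rw [hS'eq, sub_mulVec, add_mulVec, dotProduct_sub, dotProduct_add, hcross, ← mulVec_mulVec,
      hz]
    ring
  have hdiff : (Q * vecMulVec u u).trace = u ⬝ᵥ Q *ᵥ u := by
    rw [mul_vecMulVec, trace_vecMulVec, dotProduct_comm]
  rw [htrace, hquad, Matrix.mul_smul, trace_smul, Matrix.mul_sub, trace_sub, hdiff, smul_eq_mul]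
  ring
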